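/- arXiv:2411.05973 — 3 statements merged into one kernel-verified Lean document; each statement's English description precedes it below -/
import Mathlib

section
/- Call a subset C of the 24 candidate pairs admissible if for every i ∈ {1,…,8} the number of j with (i,j) ∈ C is odd, and for every j ∈ {1,…,6} the number of i with (i,j) ∈ C is even. The group G acts on admissible subsets componentwise (σ·C is the set of pairs (i',j') such that T_{i'} = σ·T_i and S_{j'} = σ·S_j for some (i,j) ∈ C). Then the number of G-orbits of admissible subsets is exactly 76; one of these orbits is that of the full set of all 24 candidate pairs (which corresponds to the monohedral tiling B𝒪), and the remaining 75 orbits correspond to the dihedral f-tilings whose prototiles are the Möbius triangle and the kite derived from B𝒪. -/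
open Matrix

attribute [local instance] Classical.propDecidable

/-- `τ = (2√2+1)/7`. -/
noncomputable def tau : ℝ := (2 * Real.sqrt 2 + 1) / 7

/-- The eight cube points `T_1, …, T_8` (indexed by `Fin 8`, so `T 0 = T_1` etc.). -/
noncomputable def T : Fin 8 → Fin 3 → ℝ :=
  ![tau • ![1, 1, 1], tau • ![-1, 1, 1], tau • ![-1, -1, 1], tau • ![1, -1, 1],
    tau • ![1, 1, -1], tau • ![-1, 1, -1], tau • ![-1, -1, -1], tau • ![1, -1, -1]]

/-- The six octahedron points `S_1, …, S_6` (indexed by `Fin 6`, so `S 0 = S_1` etc.). -/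
def S : Fin 6 → Fin 3 → ℝ :=
  ![![0, 0, 1], ![1, 0, 0], ![0, 1, 0], ![-1, 0, 0], ![0, -1, 0], ![0, 0, -1]]

/-- A `3×3` signed permutation matrix (element of the octahedral group `G`). -/
def IsSignedPerm (M : Matrix (Fin 3) (Fin 3) ℝ) : Prop :=
  Mᵀ * M = 1 ∧ (∀ i, ∃! j, M i j ≠ 0) ∧ (∀ j, ∃! i, M i j ≠ 0) ∧
    ∀ i j, M i j ≠ 0 → M i j = 1 ∨ M i j = -1

/-- The 24 candidate pairs: pairs `(i,j)` with `⟨T_i, S_j⟩ > 0`. -/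
noncomputable def cand : Finset (Fin 8 × Fin 6) :=
  Finset.univ.filter fun p => 0 < T p.1 ⬝ᵥ S p.2

/-- A subset `C` of the candidate pairs is admissible if for every `i` the number of
`j` with `(i,j) ∈ C` is odd, and for every `j` the number of `i` with `(i,j) ∈ C`
is even. -/
noncomputable def IsAdmissible (C : Finset (Fin 8 × Fin 6)) : Prop :=
  C ⊆ cand ∧ (∀ i : Fin 8, Odd (C.filter fun p => p.1 = i).card) ∧
    (∀ j : Fin 6, Even (C.filter fun p => p.2 = j).card)

/-- `C'` is obtained from `C` by the componentwise action of some `σ ∈ G`. -/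
noncomputable def admRel (C C' : {C : Finset (Fin 8 × Fin 6) // IsAdmissible C}) : Prop :=
  ∃ σ : Matrix (Fin 3) (Fin 3) ℝ, IsSignedPerm σ ∧
    ∀ p : Fin 8 × Fin 6, p ∈ C'.1 ↔
      ∃ q ∈ C.1, σ.mulVec (T q.1) = T p.1 ∧ σ.mulVec (S q.2) = S p.2

/-!
Identify the candidate pairs with the corners (incident vertex-facet pairs) of the cube. Modulo 2,
`C` is admissible exactly when its complement in the 24 corners is a cycle of the incidence graph of
the 8 vertices and 6 facets. This graph is planar and its faces are the 12 edges of the cube, so its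
cycles are the coboundaries of the two-colourings of these edges: the boundary maps have ranks 13
and 11, which add up to 24, so the complex is exact in the middle. Hence the admissible sets are
the sets of the corners whose two edges have the same colour, for a two-colouring that is unique up
to exchanging the colours. By Burnside's lemma for the group of order 96 generated by the
octahedral group and the exchange of colours, the number of orbits is 7296 / 96 = 76.
-/

section SemiconjugacyCount

open Function

variable {α β : Type*} [Fintype α] [DecidableEq α] {π : α → α}

/-- The orbit of `a` under the iterates of `π`; `Fintype.card α` iterates exhaust it. -/
def iterateOrbit (π : α → α) (a : α) : Finset α :=
  (Finset.range (Fintype.card α)).image fun k => π^[k] a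

theorem iterateOrbit_eq_image_range_minimalPeriod (hπ : Injective π) (a : α) :
    iterateOrbit π a = (Finset.range (minimalPeriod π a)).image fun k => π^[k] a := by
  have hpos : 0 < minimalPeriod π a := minimalPeriod_pos_of_mem_periodicPts (hπ.mem_periodicPts a)
  refine Finset.Subset.antisymm (Finset.image_subset_iff.mpr fun k _ => ?_)
    (Finset.image_subset_image (Finset.range_mono minimalPeriod_le_card))
  rw [← iterate_mod_minimalPeriod_eq]
  exact Finset.mem_image_of_mem _ (Finset.mem_range.mpr (Nat.mod_lt _ hpos))

theorem card_iterateOrbit (hπ : Injective π) (a : α) :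
    (iterateOrbit π a).card = minimalPeriod π a := by
  rw [iterateOrbit_eq_image_range_minimalPeriod hπ, Finset.card_image_of_injOn, Finset.card_range]
  simpa only [Finset.coe_range] using iterate_injOn_Iio_minimalPeriod

theorem iterate_mem_iterateOrbit (hπ : Injective π) (a : α) (n : ℕ) :
    π^[n] a ∈ iterateOrbit π a := by
  have hpos : 0 < minimalPeriod π a := minimalPeriod_pos_of_mem_periodicPts (hπ.mem_periodicPts a)
  rw [iterateOrbit_eq_image_range_minimalPeriod hπ, ← iterate_mod_minimalPeriod_eq]
  exact Finset.mem_image_of_mem _ (Finset.mem_range.mpr (Nat.mod_lt _ hpos))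

theorem iterateOrbit_apply (hπ : Injective π) (a : α) :
    iterateOrbit π (π a) = iterateOrbit π a := by
  have hper : minimalPeriod π (π a) = minimalPeriod π a :=
    minimalPeriod_apply (hπ.mem_periodicPts a)
  refine Finset.eq_of_subset_of_card_le (Finset.image_subset_iff.mpr fun k _ => ?_) ?_
  · exact iterate_mem_iterateOrbit hπ a (k + 1)
  · rw [card_iterateOrbit hπ, card_iterateOrbit hπ, hper]

theorem iterate_card_iterateOrbit_of_semiconj {τ : β → β} {f : α → β} (hπ : Injective π)
    (hf : Semiconj f π τ) (a : α) : τ^[(iterateOrbit π a).card] (f a) = f a := by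
  rw [← hf.iterate_right _ a, card_iterateOrbit hπ, iterate_minimalPeriod]

theorem iterate_eq_iterate_of_card_iterateOrbit {τ : β → β} (hπ : Injective π) {a : α} {b : β}
    (hb : τ^[(iterateOrbit π a).card] b = b) {m n : ℕ} (h : π^[m] a = π^[n] a) :
    τ^[m] b = τ^[n] b := by
  have hpos : 0 < minimalPeriod π a := minimalPeriod_pos_of_mem_periodicPts (hπ.mem_periodicPts a)
  have hmod : m % minimalPeriod π a = n % minimalPeriod π a := by
    rwa [← iterate_mod_minimalPeriod_eq, ← iterate_mod_minimalPeriod_eq (n := n),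
      iterate_eq_iterate_iff_of_lt_minimalPeriod (Nat.mod_lt _ hpos) (Nat.mod_lt _ hpos)] at h
  have hper : IsPeriodicPt τ (minimalPeriod π a) b := by rwa [← card_iterateOrbit hπ]
  rw [← hper.iterate_mod_apply, hmod, hper.iterate_mod_apply]

theorem exists_iterate_eq_of_iterateOrbit_eq (hπ : Injective π) {a b : α}
    (h : iterateOrbit π a = iterateOrbit π b) : ∃ n, π^[n] a = b := by
  have hb : b ∈ iterateOrbit π a := h ▸ iterate_mem_iterateOrbit hπ b 0
  obtain ⟨n, -, hn⟩ := Finset.mem_image.mp hb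
  exact ⟨n, hn⟩

theorem exists_semiconj_of_representatives {τ : β → β} (hπ : Injective π)
    (rep : Finset.univ.image (iterateOrbit π) → α) (hrep : ∀ O, iterateOrbit π (rep O) = O)
    (b : Finset.univ.image (iterateOrbit π) → β) (hb : ∀ O, τ^[O.1.card] (b O) = b O) :
    ∃ f, Semiconj f π τ ∧ ∀ O, f (rep O) = b O := by
  let orb (a : α) : Finset.univ.image (iterateOrbit π) :=
    ⟨iterateOrbit π a, Finset.mem_image_of_mem _ (Finset.mem_univ a)⟩
  have orb_apply (a : α) : orb (π a) = orb a := Subtype.ext (iterateOrbit_apply hπ a)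
  have orb_rep (O) : orb (rep O) = O := Subtype.ext (hrep O)
  choose n hn using fun a => exists_iterate_eq_of_iterateOrbit_eq hπ (hrep (orb a))
  have iterate_congr (O) {k l : ℕ} (h : π^[k] (rep O) = π^[l] (rep O)) :
      τ^[k] (b O) = τ^[l] (b O) :=
    iterate_eq_iterate_of_card_iterateOrbit hπ (by rw [hrep]; exact hb O) h
  refine ⟨fun a => τ^[n a] (b (orb a)), fun a => ?_, fun O => ?_⟩
  · have step : π^[n (π a)] (rep (orb a)) = π^[n a + 1] (rep (orb a)) := by
      rw [iterate_succ_apply', hn, ← orb_apply, hn]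
    calc τ^[n (π a)] (b (orb (π a))) = τ^[n (π a)] (b (orb a)) := by rw [orb_apply]
      _ = τ^[n a + 1] (b (orb a)) := iterate_congr _ step
      _ = τ (τ^[n a] (b (orb a))) := iterate_succ_apply' τ _ _
  · have fixes : π^[n (rep O)] (rep O) = π^[0] (rep O) := by
      simpa only [orb_rep, iterate_zero, id_eq] using hn (rep O)
    simpa only [orb_rep, iterate_zero, id_eq] using iterate_congr O fixes

-- A semiconjugacy is free on one representative per orbit, subject to the period of that orbit.
theorem card_semiconj [Fintype β] [DecidableEq β] (τ : β → β) (hπ : Injective π) :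
    Nat.card {f : α → β // Semiconj f π τ} =
      ∏ O ∈ Finset.univ.image (iterateOrbit π),
        (Finset.univ.filter fun b => τ^[O.card] b = b).card := by
  let orbits := Finset.univ.image (iterateOrbit π)
  have exists_rep (O : orbits) : ∃ a, iterateOrbit π a = O := by
    simpa only [orbits, Finset.mem_image, Finset.mem_univ, true_and] using O.2
  choose rep hrep using exists_rep
  let restrict (f : {f : α → β // Semiconj f π τ}) (O : orbits) : {b // τ^[O.1.card] b = b} :=
    ⟨f.1 (rep O), by
      simpa only [hrep] using iterate_card_iterateOrbit_of_semiconj hπ f.2 (rep O)⟩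
  have restrict_injective : Injective restrict := fun f f' h => Subtype.ext <| funext fun a => by
    let O : orbits := ⟨iterateOrbit π a, Finset.mem_image_of_mem _ (Finset.mem_univ a)⟩
    have hO : f.1 (rep O) = f'.1 (rep O) := congrArg Subtype.val (congrFun h O)
    obtain ⟨n, hn⟩ := exists_iterate_eq_of_iterateOrbit_eq hπ (hrep O)
    rw [← hn, f.2.iterate_right, f'.2.iterate_right, hO]
  have restrict_surjective : Surjective restrict := fun b => by
    obtain ⟨f, hf, hfb⟩ :=
      exists_semiconj_of_representatives hπ rep hrep (fun O => (b O).1) fun O => (b O).2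
    exact ⟨⟨f, hf⟩, funext fun O => Subtype.ext (hfb O)⟩
  calc Nat.card {f : α → β // Semiconj f π τ}
      = ∏ O : orbits, Nat.card {b // τ^[O.1.card] b = b} := by
        rw [Nat.card_congr (Equiv.ofBijective restrict ⟨restrict_injective, restrict_surjective⟩),
          Nat.card_pi]
    _ = ∏ O : orbits, (Finset.univ.filter fun b => τ^[O.1.card] b = b).card := by
        simp only [Nat.card_eq_fintype_card, Fintype.card_subtype]
    _ = ∏ O ∈ orbits, (Finset.univ.filter fun b => τ^[O.card] b = b).card :=
        Finset.prod_coe_sort orbits fun O => (Finset.univ.filter fun b => τ^[O.card] b = b).card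

end SemiconjugacyCount

section Exactness

variable {l m n K : Type*} [Fintype n] [Field K]

theorem exists_mulVec_eq_of_card_le_rank_add_rank [Fintype m]
    {A : Matrix l m K} {B : Matrix m n K} (hAB : A * B = 0)
    (hrank : Fintype.card m ≤ A.rank + B.rank) {y : m → K} (hy : A *ᵥ y = 0) : ∃ x, B *ᵥ x = y := by
  have range_le_ker : B.mulVecLin.range ≤ A.mulVecLin.ker := by
    rw [LinearMap.range_le_ker_iff, ← Matrix.mulVecLin_mul, hAB, Matrix.mulVecLin_zero]
  have finrank_ker : A.rank + Module.finrank K A.mulVecLin.ker = Fintype.card m := by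
    rw [Matrix.rank, LinearMap.finrank_range_add_finrank_ker, Module.finrank_fintype_fun_eq_card]
  have range_eq_ker : B.mulVecLin.range = A.mulVecLin.ker :=
    Submodule.eq_of_le_of_finrank_le range_le_ker (by rw [← Matrix.rank]; omega)
  have hy_mem : y ∈ B.mulVecLin.range := by rwa [range_eq_ker, LinearMap.mem_ker]
  exact hy_mem

variable [DecidableEq n]

/-- Every index `a` other than `root` is joined to a lower index `b` by a row `e_a - e_b` of `A`. If
the rows of `A` are the edges of a graph, this exhibits a spanning tree. -/
def HasDescent (A : Matrix m n K) (height : n → ℤ) (root : n) : Prop :=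
  ∀ a ≠ root, ∃ b, height b < height a ∧ ∃ p, A.row p = Pi.single a 1 - Pi.single b 1

instance [Fintype m] [DecidableEq K] (A : Matrix m n K) (height : n → ℤ) (root : n) :
    Decidable (HasDescent A height root) := by
  unfold HasDescent
  infer_instance

theorem HasDescent.apply_eq_apply_root {A : Matrix m n K} {height : n → ℤ} {root : n}
    (descent : HasDescent A height root) {x : n → K} (hx : A *ᵥ x = 0) (a : n) : x a = x root := by
  classical
  by_contra ha
  obtain ⟨a, ha, lowest⟩ := Finset.exists_min_image (Finset.univ.filter fun a => x a ≠ x root)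
    height ⟨a, by simpa using ha⟩
  rw [Finset.mem_filter_univ] at ha
  obtain ⟨b, hba, p, hp⟩ := descent a fun h => ha (congrArg x h)
  have hxab : x a = x b := by
    have row_eq : A.row p ⬝ᵥ x = 0 := congrFun hx p
    rwa [hp, sub_dotProduct, single_one_dotProduct, single_one_dotProduct, sub_eq_zero] at row_eq
  have hb : x b ≠ x root := hxab ▸ ha
  exact absurd (lowest b (Finset.mem_filter_univ _ |>.mpr hb)) (not_le.mpr hba)

theorem HasDescent.rank_add_one_eq_card [Finite m] {A : Matrix m n K} {height : n → ℤ} {root : n}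
    (descent : HasDescent A height root) (hA : A *ᵥ 1 = 0) : A.rank + 1 = Fintype.card n := by
  have ker_eq : A.mulVecLin.ker = K ∙ (1 : n → K) := by
    refine le_antisymm (fun x hx => Submodule.mem_span_singleton.mpr ⟨x root, funext fun a => ?_⟩)
      ((Submodule.span_singleton_le_iff_mem _ _).mpr hA)
    rw [Pi.smul_apply, Pi.one_apply, smul_eq_mul, mul_one, descent.apply_eq_apply_root hx a]
  have one_ne_zero : (1 : n → K) ≠ 0 := fun h => _root_.one_ne_zero (congrFun h root)
  rw [← finrank_span_singleton (K := K) one_ne_zero, ← ker_eq, Matrix.rank,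
    LinearMap.finrank_range_add_finrank_ker, Module.finrank_fintype_fun_eq_card]

end Exactness

/-- If `Φ` is onto and pulls `r` back to a setoid, then the classes of `r` are those of the
setoid. -/
noncomputable def quotEquivOfSurjective {X Y : Type*} {s : Setoid X} {r : Y → Y → Prop} (Φ : X → Y)
    (surjective : Function.Surjective Φ) (rel_iff : ∀ x x', r (Φ x) (Φ x') ↔ s x x') :
    Quot r ≃ Quotient s where
  toFun := Quot.lift (fun y => Quotient.mk s (Function.surjInv surjective y)) fun y y' h =>
    Quotient.sound <| (rel_iff _ _).mp <| by
      rwa [Function.surjInv_eq surjective, Function.surjInv_eq surjective]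
  invFun := Quotient.lift (fun x => Quot.mk r (Φ x)) fun x x' h => Quot.sound ((rel_iff x x').mpr h)
  left_inv := Quot.ind fun y => congrArg (Quot.mk r) (Function.surjInv_eq surjective y)
  right_inv := Quotient.ind fun x => Quotient.sound <| (rel_iff _ _).mp <| by
    rw [Function.surjInv_eq surjective]
    exact (rel_iff x x).mpr (s.refl x)

section Cube

/-- The octahedral group, as the signed permutations of the three coordinates. -/
abbrev OctahedralGroup := (Fin 3 → SignTypeˣ) ⋊[mulAutArrow] Equiv.Perm (Fin 3)

instance : Fintype OctahedralGroup := Fintype.ofEquiv _ SemidirectProduct.equivProd.symm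

/-- The barycentre of a face of the cube `[-1, 1]³`, which stands for that face: the vertices, edges
and facets are the cells with no, one and two zero coordinates. -/
abbrev Cell := Fin 3 → SignType

instance : MulAction OctahedralGroup Cell where
  smul g x k := g.left k * x (g.right⁻¹ k)
  one_smul _ := funext fun _ => one_mul _
  mul_smul _ _ _ := funext fun _ => mul_assoc _ _ _

theorem octahedralGroup_smul_apply (g : OctahedralGroup) (x : Cell) (k : Fin 3) :
    (g • x) k = g.left k * x (g.right⁻¹ k) := rfl

/-- The number of zero coordinates of a cell, that is, the dimension of the face it stands for. -/
def Cell.dim (x : Cell) : ℕ := (Finset.univ.filter fun k => x k = 0).card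

theorem Cell.dim_smul (g : OctahedralGroup) (x : Cell) : (g • x).dim = x.dim :=
  Finset.card_equiv g.right⁻¹ fun k => by
    simp only [Finset.mem_filter_univ, octahedralGroup_smul_apply, Units.mul_right_eq_zero]

/-- The face of the cube with barycentre `x` contains the face with barycentre `y`. -/
def Cell.Contains (x y : Cell) : Prop := ∀ k, x k = 0 ∨ x k = y k

instance : DecidableRel Cell.Contains := fun x y =>
  inferInstanceAs (Decidable (∀ k, x k = 0 ∨ x k = y k))

theorem Cell.smul_contains_smul (g : OctahedralGroup) {x y : Cell} :
    (g • x).Contains (g • y) ↔ x.Contains y := by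
  have at_index (k : Fin 3) : ((g • x) k = 0 ∨ (g • x) k = (g • y) k) ↔
      (x (g.right⁻¹ k) = 0 ∨ x (g.right⁻¹ k) = y (g.right⁻¹ k)) := by
    simp only [octahedralGroup_smul_apply, Units.mul_right_eq_zero, Units.mul_right_inj]
  exact (forall_congr' at_index).trans
    ((Equiv.surjective g.right⁻¹).forall (p := fun k => x k = 0 ∨ x k = y k)).symm

/-- The twelve edges of the cube. -/
def cubeEdges : SubMulAction OctahedralGroup Cell where
  carrier := {x | x.dim = 1}
  smul_mem' g x hx := (x.dim_smul g).trans hx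

instance : DecidablePred (· ∈ cubeEdges) := fun x => inferInstanceAs (Decidable (x.dim = 1))

/-- The edges of the cube, as a type on which the octahedral group acts. -/
abbrev Edge : Type := cubeEdges

instance : Fintype Edge := Subtype.fintype _

/-- The cell in the direction of `T i`. -/
def vertexCell : Fin 8 → Cell :=
  ![![1, 1, 1], ![-1, 1, 1], ![-1, -1, 1], ![1, -1, 1],
    ![1, 1, -1], ![-1, 1, -1], ![-1, -1, -1], ![1, -1, -1]]

/-- The cell in the direction of `S j`. -/
def facetCell : Fin 6 → Cell :=
  ![![0, 0, 1], ![1, 0, 0], ![0, 1, 0], ![-1, 0, 0], ![0, -1, 0], ![0, 0, -1]]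

theorem exists_vertexCell_eq_iff (x : Cell) : (∃ i, vertexCell i = x) ↔ x.dim = 0 := by
  revert x; decide +kernel

theorem exists_facetCell_eq_iff (x : Cell) : (∃ j, facetCell j = x) ↔ x.dim = 2 := by
  revert x; decide +kernel

end Cube

section Realization

/-- The point of `ℝ³` with the signs of `x` as coordinates. -/
def Cell.toReal (x : Cell) : Fin 3 → ℝ := fun k => SignType.cast (x k)

theorem Cell.toReal_injective : Function.Injective Cell.toReal := by
  have cast_injective : ∀ s t : SignType, (s : ℝ) = t → s = t := by
    rintro (_ | _ | _) (_ | _ | _) h <;> first | rfl | norm_num at h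
  exact fun x y h => funext fun k => cast_injective _ _ (congrFun h k)

theorem T_eq_smul_toReal (i : Fin 8) : T i = tau • (vertexCell i).toReal := by
  fin_cases i <;> (ext k; fin_cases k) <;> simp [T, vertexCell, Cell.toReal]

theorem S_eq_toReal (j : Fin 6) : S j = (facetCell j).toReal := by
  fin_cases j <;> (ext k; fin_cases k) <;> simp [S, facetCell, Cell.toReal]

theorem tau_pos : 0 < tau := by unfold tau; positivity

theorem mem_cand_iff (p : Fin 8 × Fin 6) :
    p ∈ cand ↔ (facetCell p.2).Contains (vertexCell p.1) := by
  obtain ⟨i, j⟩ := p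
  have inner_eq : T i ⬝ᵥ S j =
      tau * ((∑ k, (vertexCell i k : ℤ) * (facetCell j k : ℤ) : ℤ) : ℝ) := by
    rw [T_eq_smul_toReal, S_eq_toReal, smul_dotProduct, smul_eq_mul]
    simp only [dotProduct, Cell.toReal, Int.cast_sum, Int.cast_mul, SignType.intCast_cast]
  have inner_pos_iff : ∀ i j, 0 < ∑ k, (vertexCell i k : ℤ) * (facetCell j k : ℤ) ↔
      (facetCell j).Contains (vertexCell i) := by decide +kernel
  rw [cand, Finset.mem_filter_univ, inner_eq, mul_pos_iff_of_pos_left tau_pos, Int.cast_pos,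
    inner_pos_iff]

/-- The signed permutation matrix by which `g` acts on `ℝ³`. -/
def OctahedralGroup.toMatrix (g : OctahedralGroup) : Matrix (Fin 3) (Fin 3) ℝ :=
  Matrix.of fun i j => if j = g.right⁻¹ i then ((g.left i : SignType) : ℝ) else 0

theorem toMatrix_mulVec (g : OctahedralGroup) (x : Cell) :
    g.toMatrix *ᵥ x.toReal = (g • x).toReal := by
  ext i
  simp only [Matrix.mulVec, dotProduct, OctahedralGroup.toMatrix, Matrix.of_apply, Cell.toReal,
    ite_mul, zero_mul, Finset.sum_ite_eq', Finset.mem_univ, if_true, octahedralGroup_smul_apply,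
    SignType.coe_mul]

theorem isSignedPerm_toMatrix (g : OctahedralGroup) : IsSignedPerm g.toMatrix := by
  have sign_eq (i : Fin 3) :
      ((g.left i : SignType) : ℝ) = 1 ∨ ((g.left i : SignType) : ℝ) = -1 := by
    have units_eq : ∀ u : SignTypeˣ, u = 1 ∨ u = -1 := by decide +kernel
    rcases units_eq (g.left i) with h | h <;> simp [h]
  have entry_ne_zero_iff (i j : Fin 3) : g.toMatrix i j ≠ 0 ↔ j = g.right⁻¹ i := by
    rcases sign_eq i with h | h <;> simp [OctahedralGroup.toMatrix, h]
  refine ⟨?_, fun i => ?_, fun j => ?_, fun i j hij => ?_⟩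
  · ext j j'
    have sign_mul_self (i : Fin 3) : ((g.left i : SignType) : ℝ) * (g.left i : SignType) = 1 := by
      rcases sign_eq i with h | h <;> norm_num [h]
    simp only [Matrix.mul_apply, Matrix.transpose_apply, OctahedralGroup.toMatrix, Matrix.of_apply,
      Equiv.Perm.eq_inv_iff_eq, ite_mul, zero_mul, mul_ite, mul_zero, Finset.sum_ite_eq,
      Finset.mem_univ, if_true, EmbeddingLike.apply_eq_iff_eq, sign_mul_self, Matrix.one_apply]
  · simp only [entry_ne_zero_iff, existsUnique_eq]
  · simp only [entry_ne_zero_iff, Equiv.Perm.eq_inv_iff_eq, existsUnique_eq']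
  · rw [entry_ne_zero_iff] at hij
    simpa only [OctahedralGroup.toMatrix, Matrix.of_apply, if_pos hij] using sign_eq i

theorem isSignedPerm_iff_exists_toMatrix_eq (M : Matrix (Fin 3) (Fin 3) ℝ) :
    IsSignedPerm M ↔ ∃ g : OctahedralGroup, g.toMatrix = M := by
  refine ⟨fun ⟨_, row_unique, col_unique, entries⟩ => ?_, fun ⟨g, hg⟩ =>
    hg ▸ isSignedPerm_toMatrix g⟩
  choose σ hσ σ_unique using row_unique
  have σ_injective : Function.Injective σ := fun i i' h =>
    (col_unique (σ i)).unique (hσ i) (h ▸ hσ i')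
  have exists_sign (i : Fin 3) : ∃ u : SignTypeˣ, ((u : SignType) : ℝ) = M i (σ i) := by
    rcases entries i (σ i) (hσ i) with h | h
    · exact ⟨1, by simp [h]⟩
    · exact ⟨-1, by simp [h]⟩
  choose d hd using exists_sign
  let π : Equiv.Perm (Fin 3) := Equiv.ofBijective σ σ_injective.bijective_of_finite
  refine ⟨⟨d, π⁻¹⟩, Matrix.ext fun i j => ?_⟩
  change (if j = σ i then ((d i : SignType) : ℝ) else 0) = M i j
  split_ifs with h
  · rw [h, hd]
  · exact (not_not.mp fun hM => h (σ_unique i j hM)).symm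

end Realization

section Incidence

/-- The incident pairs of a vertex and a facet of the cube: the candidate pairs. -/
abbrev Corner := {p : Fin 8 × Fin 6 // (facetCell p.2).Contains (vertexCell p.1)}

/-- The edges of the cube at the vertex `v` that bound the facet `f`. -/
def edgesBetween (f v : Cell) : Finset Edge :=
  Finset.univ.filter fun e => f.Contains e ∧ Cell.Contains e v

/-- The incidence matrix mod 2 of corners and edges: each corner meets two edges. -/
def cornerEdge : Matrix Corner Edge (ZMod 2) :=
  Matrix.of fun p e => if e ∈ edgesBetween (facetCell p.1.2) (vertexCell p.1.1) then 1 else 0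

/-- The incidence matrix mod 2 of corners with the vertices and facets of the cube. -/
def nodeCorner : Matrix (Fin 8 ⊕ Fin 6) Corner (ZMod 2) :=
  Matrix.of <| Sum.elim (fun i p => if p.1.1 = i then 1 else 0)
    (fun j p => if p.1.2 = j then 1 else 0)

theorem nodeCorner_mul_cornerEdge : nodeCorner * cornerEdge = 0 := by
  decide +kernel

/-- A generic linear functional: every vertex, edge or facet of the cube other than the lowest one
has a lower neighbour. -/
def Cell.height (x : Cell) : ℤ := 9 * x 0 + 3 * x 1 + x 2

/-- The lowest edge of the cube. -/
def lowestEdge : Edge := ⟨![-1, -1, 0], by decide +kernel⟩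

theorem hasDescent_cornerEdge :
    HasDescent cornerEdge (fun e => Cell.height e) lowestEdge := by
  decide +kernel

-- Facets are scaled to lie between the vertices that they are adjacent to.
theorem hasDescent_nodeCorner : HasDescent nodeCornerᵀ
    (Sum.elim (fun i => (vertexCell i).height) fun j => 2 * (facetCell j).height) (Sum.inr 3) := by
  decide +kernel

theorem rank_cornerEdge : cornerEdge.rank = 11 := by
  have rank_add_one := hasDescent_cornerEdge.rank_add_one_eq_card (by decide +kernel)
  have card_edge : Fintype.card Edge = 12 := by decide +kernel
  omega

theorem rank_nodeCorner : nodeCorner.rank = 13 := by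
  have rank_add_one := hasDescent_nodeCorner.rank_add_one_eq_card (by decide +kernel)
  rw [Matrix.rank_transpose, Fintype.card_sum, Fintype.card_fin, Fintype.card_fin] at rank_add_one
  omega

theorem nodeCorner_mulVec_eq_zero_iff_exists (y : Corner → ZMod 2) :
    nodeCorner *ᵥ y = 0 ↔ ∃ c, cornerEdge *ᵥ c = y := by
  refine ⟨fun hy => ?_, fun ⟨c, hc⟩ => ?_⟩
  · have card_corner : Fintype.card Corner = 24 := by decide +kernel
    refine exists_mulVec_eq_of_card_le_rank_add_rank nodeCorner_mul_cornerEdge ?_ hy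
    rw [rank_nodeCorner, rank_cornerEdge, card_corner]
  · rw [← hc, Matrix.mulVec_mulVec, nodeCorner_mul_cornerEdge, Matrix.zero_mulVec]

end Incidence

section Admissibility

/-- The indicator mod 2 of the corners that belong to `C`. -/
def cornerIndicator (C : Finset (Fin 8 × Fin 6)) : Corner → ZMod 2 :=
  fun p => if p.1 ∈ C then 1 else 0

theorem sum_cornerIndicator {C : Finset (Fin 8 × Fin 6)} (hC : C ⊆ cand)
    (q : Fin 8 × Fin 6 → Prop) [DecidablePred q] :
    ∑ p : Corner, (if q p then cornerIndicator C p else 0) = (C.filter q).card := by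
  let weight (p : Fin 8 × Fin 6) : ZMod 2 := if q p then if p ∈ C then 1 else 0 else 0
  calc ∑ p : Corner, weight p
    _ = ∑ p ∈ cand, weight p := (Finset.sum_subtype cand mem_cand_iff weight).symm
    _ = ∑ p ∈ C, weight p := (Finset.sum_subset hC fun p _ hp => by simp [weight, hp]).symm
    _ = ∑ p ∈ C, if q p then 1 else 0 := Finset.sum_congr rfl fun p hp => by simp [weight, hp]
    _ = (C.filter q).card := (Finset.natCast_card_filter q C).symm

theorem isAdmissible_iff_nodeCorner_mulVec_eq_zero (C : Finset (Fin 8 × Fin 6)) :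
    IsAdmissible C ↔ C ⊆ cand ∧ nodeCorner *ᵥ (1 - cornerIndicator C) = 0 := by
  refine and_congr_right fun hC => ?_
  have nodeCorner_one : nodeCorner *ᵥ 1 = Sum.elim (fun _ => 1) fun _ => 0 := by decide +kernel
  have at_vertex (i : Fin 8) : (nodeCorner *ᵥ cornerIndicator C) (Sum.inl i) =
      (C.filter fun p => p.1 = i).card := by
    simpa [Matrix.mulVec, dotProduct, nodeCorner] using sum_cornerIndicator hC fun p => p.1 = i
  have at_facet (j : Fin 6) : (nodeCorner *ᵥ cornerIndicator C) (Sum.inr j) =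
      (C.filter fun p => p.2 = j).card := by
    simpa [Matrix.mulVec, dotProduct, nodeCorner] using sum_cornerIndicator hC fun p => p.2 = j
  simp only [Matrix.mulVec_sub, nodeCorner_one, sub_eq_zero, funext_iff, Sum.forall, Sum.elim_inl,
    Sum.elim_inr, at_vertex, at_facet, eq_comm (a := (1 : ZMod 2)),
    eq_comm (a := (0 : ZMod 2)), ZMod.natCast_eq_one_iff_odd, ZMod.natCast_eq_zero_iff_even]

end Admissibility

section Colorings

/-- A two-colouring of the edges of the cube. -/
abbrev EdgeColoring := Edge → ZMod 2

/-- The rotations and reflections of the cube together with the exchange of the two colours. -/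
abbrev ColoringSymmetry := OctahedralGroup × Multiplicative (ZMod 2)

instance : MulAction ColoringSymmetry EdgeColoring where
  smul h c e := c (h.1⁻¹ • e) + h.2.toAdd
  one_smul c := funext fun e => by
    change c ((1 : OctahedralGroup)⁻¹ • e) + 0 = c e
    rw [inv_one, one_smul, add_zero]
  mul_smul h h' c := funext fun e => by
    change c ((h.1 * h'.1)⁻¹ • e) + (h.2.toAdd + h'.2.toAdd) =
      c (h'.1⁻¹ • h.1⁻¹ • e) + h'.2.toAdd + h.2.toAdd
    rw [_root_.mul_inv_rev, mul_smul, add_assoc, add_comm h.2.toAdd]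

theorem coloring_smul_apply (h : ColoringSymmetry) (c : EdgeColoring) (e : Edge) :
    (h • c) e = c (h.1⁻¹ • e) + h.2.toAdd := rfl

/-- `v` is a vertex of the facet `f`, and the edges of `f` at `v` have the same colour. -/
def EdgeColoring.IsMonochromaticAt (c : EdgeColoring) (f v : Cell) : Prop :=
  f.Contains v ∧ ∀ e ∈ edgesBetween f v, ∀ e' ∈ edgesBetween f v, c e = c e'

theorem smul_mem_edgesBetween_smul (g : OctahedralGroup) {f v : Cell} {e : Edge} :
    g • e ∈ edgesBetween (g • f) (g • v) ↔ e ∈ edgesBetween f v := by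
  simp only [edgesBetween, Finset.mem_filter_univ, SubMulAction.val_smul, Cell.smul_contains_smul]

theorem isMonochromaticAt_smul (h : ColoringSymmetry) (c : EdgeColoring) {f v : Cell} :
    (h • c).IsMonochromaticAt (h.1 • f) (h.1 • v) ↔ c.IsMonochromaticAt f v := by
  refine and_congr (Cell.smul_contains_smul h.1) ?_
  have surjective : Function.Surjective fun e : Edge => h.1 • e := MulAction.surjective h.1
  rw [surjective.forall]
  refine forall_congr' fun e => imp_congr (smul_mem_edgesBetween_smul h.1) ?_
  rw [surjective.forall]
  refine forall_congr' fun e' => imp_congr (smul_mem_edgesBetween_smul h.1) ?_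
  rw [coloring_smul_apply, coloring_smul_apply, inv_smul_smul, inv_smul_smul, add_left_inj]

instance (c : EdgeColoring) (f v : Cell) : Decidable (c.IsMonochromaticAt f v) :=
  inferInstanceAs (Decidable (_ ∧ _))

/-- The candidate pairs at which the two edges of the facet at the vertex have the same colour. -/
def EdgeColoring.monochromaticPairs (c : EdgeColoring) : Finset (Fin 8 × Fin 6) :=
  Finset.univ.filter fun p => c.IsMonochromaticAt (facetCell p.2) (vertexCell p.1)

theorem monochromaticPairs_subset_cand (c : EdgeColoring) : c.monochromaticPairs ⊆ cand :=
  fun p hp => (mem_cand_iff p).mpr (Finset.mem_filter_univ p |>.mp hp).1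

theorem card_edgesBetween (p : Corner) :
    (edgesBetween (facetCell p.1.2) (vertexCell p.1.1)).card = 2 := by
  revert p; decide +kernel

theorem cornerEdge_mulVec_eq_zero_iff (c : EdgeColoring) (p : Corner) :
    (cornerEdge *ᵥ c) p = 0 ↔ p.1 ∈ c.monochromaticPairs := by
  obtain ⟨a, b, hab, hE⟩ := Finset.card_eq_two.mp (card_edgesBetween p)
  have sum_eq : (cornerEdge *ᵥ c) p = c a + c b := by
    simp only [Matrix.mulVec, dotProduct, cornerEdge, Matrix.of_apply, ite_mul, one_mul, zero_mul,
      Finset.sum_ite_mem, Finset.univ_inter, hE, Finset.sum_pair hab]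
  have monochromatic_iff : (∀ e ∈ ({a, b} : Finset Edge), ∀ e' ∈ ({a, b} : Finset Edge),
      c e = c e') ↔ c a = c b := by
    simp only [Finset.forall_mem_insert, Finset.mem_singleton, forall_eq, true_and, and_true,
      eq_comm (a := c b), and_self]
  rw [sum_eq, CharTwo.add_eq_zero, EdgeColoring.monochromaticPairs, Finset.mem_filter_univ,
    EdgeColoring.IsMonochromaticAt, hE, monochromatic_iff, and_iff_right p.2]

theorem cornerEdge_mulVec (c : EdgeColoring) :
    cornerEdge *ᵥ c = 1 - cornerIndicator c.monochromaticPairs := by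
  have eq_one_of_ne_zero : ∀ t : ZMod 2, t ≠ 0 → t = 1 := by decide
  ext p
  by_cases hp : p.1 ∈ c.monochromaticPairs
  · simpa [cornerIndicator, hp] using (cornerEdge_mulVec_eq_zero_iff c p).mpr hp
  · simpa [cornerIndicator, hp] using
      eq_one_of_ne_zero _ ((cornerEdge_mulVec_eq_zero_iff c p).not.mpr hp)

end Colorings

section Correspondence

theorem isAdmissible_monochromaticPairs (c : EdgeColoring) : IsAdmissible c.monochromaticPairs :=
  (isAdmissible_iff_nodeCorner_mulVec_eq_zero _).mpr ⟨monochromaticPairs_subset_cand c,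
    (nodeCorner_mulVec_eq_zero_iff_exists _).mpr ⟨c, cornerEdge_mulVec c⟩⟩

theorem eq_of_cornerIndicator_eq {C C' : Finset (Fin 8 × Fin 6)} (hC : C ⊆ cand)
    (hC' : C' ⊆ cand) (h : cornerIndicator C = cornerIndicator C') : C = C' := by
  ext p
  by_cases hp : p ∈ cand
  · have at_p := congrFun h ⟨p, (mem_cand_iff p).mp hp⟩
    by_cases hpC : p ∈ C <;> by_cases hpC' : p ∈ C' <;> simp_all [cornerIndicator]
  · exact iff_of_false (fun h => hp (hC h)) fun h => hp (hC' h)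

theorem exists_monochromaticPairs_eq {C : Finset (Fin 8 × Fin 6)} (hC : IsAdmissible C) :
    ∃ c : EdgeColoring, c.monochromaticPairs = C := by
  obtain ⟨hC, cycle⟩ := (isAdmissible_iff_nodeCorner_mulVec_eq_zero C).mp hC
  obtain ⟨c, hc⟩ := (nodeCorner_mulVec_eq_zero_iff_exists _).mp cycle
  rw [cornerEdge_mulVec, sub_right_inj] at hc
  exact ⟨c, eq_of_cornerIndicator_eq (monochromaticPairs_subset_cand c) hC hc⟩

theorem exists_add_const_of_monochromaticPairs_eq {c c' : EdgeColoring}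
    (h : c.monochromaticPairs = c'.monochromaticPairs) : ∃ t, ∀ e, c e = c' e + t := by
  have sub_mem_ker : cornerEdge *ᵥ (c - c') = 0 := by
    rw [Matrix.mulVec_sub, cornerEdge_mulVec, cornerEdge_mulVec, h, sub_self]
  exact ⟨_, fun e => sub_eq_iff_eq_add'.mp <|
    hasDescent_cornerEdge.apply_eq_apply_root sub_mem_ker e⟩

theorem mem_monochromaticPairs_smul (h : ColoringSymmetry) (c : EdgeColoring) (p : Fin 8 × Fin 6) :
    p ∈ (h • c).monochromaticPairs ↔ ∃ q ∈ c.monochromaticPairs,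
      h.1 • vertexCell q.1 = vertexCell p.1 ∧ h.1 • facetCell q.2 = facetCell p.2 := by
  obtain ⟨i, hi⟩ := (exists_vertexCell_eq_iff (h.1⁻¹ • vertexCell p.1)).mpr <| by
    rw [Cell.dim_smul]; exact (exists_vertexCell_eq_iff _).mp ⟨_, rfl⟩
  obtain ⟨j, hj⟩ := (exists_facetCell_eq_iff (h.1⁻¹ • facetCell p.2)).mpr <| by
    rw [Cell.dim_smul]; exact (exists_facetCell_eq_iff _).mp ⟨_, rfl⟩
  simp only [EdgeColoring.monochromaticPairs, Finset.mem_filter_univ]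
  constructor
  · intro hp
    refine ⟨(i, j), ?_, eq_inv_smul_iff.mp hi, eq_inv_smul_iff.mp hj⟩
    rwa [← isMonochromaticAt_smul h, eq_inv_smul_iff.mp hi, eq_inv_smul_iff.mp hj]
  · rintro ⟨q, hq, hv, hf⟩
    rwa [← hv, ← hf, isMonochromaticAt_smul]

theorem admRel_iff (C C' : {C : Finset (Fin 8 × Fin 6) // IsAdmissible C}) :
    admRel C C' ↔ ∃ g : OctahedralGroup, ∀ p, p ∈ C'.1 ↔ ∃ q ∈ C.1,
      g • vertexCell q.1 = vertexCell p.1 ∧ g • facetCell q.2 = facetCell p.2 := by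
  simp only [admRel, isSignedPerm_iff_exists_toMatrix_eq, exists_exists_eq_and, T_eq_smul_toReal,
    S_eq_toReal, Matrix.mulVec_smul, toMatrix_mulVec, smul_right_inj tau_pos.ne',
    Cell.toReal_injective.eq_iff]

/-- The admissible set of the corners at which an edge colouring is monochromatic. -/
def EdgeColoring.admissibleSet (c : EdgeColoring) :
    {C : Finset (Fin 8 × Fin 6) // IsAdmissible C} :=
  ⟨c.monochromaticPairs, isAdmissible_monochromaticPairs c⟩

theorem admissibleSet_surjective : Function.Surjective EdgeColoring.admissibleSet := fun C =>
  (exists_monochromaticPairs_eq C.2).imp fun _ hc => Subtype.ext hc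

theorem admRel_admissibleSet_iff (c c' : EdgeColoring) :
    admRel c.admissibleSet c'.admissibleSet ↔
      MulAction.orbitRel ColoringSymmetry EdgeColoring c c' := by
  have monochromaticPairs_smul_iff (h : ColoringSymmetry) :
      (h • c).monochromaticPairs = c'.monochromaticPairs ↔
        ∀ p, p ∈ c'.monochromaticPairs ↔ ∃ q ∈ c.monochromaticPairs,
          h.1 • vertexCell q.1 = vertexCell p.1 ∧ h.1 • facetCell q.2 = facetCell p.2 := by
    simp only [Finset.ext_iff, mem_monochromaticPairs_smul, Iff.comm]
  rw [admRel_iff, (MulAction.orbitRel _ _).comm', MulAction.orbitRel_apply, MulAction.mem_orbit_iff]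
  constructor
  · rintro ⟨g, hg⟩
    obtain ⟨t, ht⟩ := exists_add_const_of_monochromaticPairs_eq
      ((monochromaticPairs_smul_iff (g, 1)).mpr hg).symm
    refine ⟨(g, .ofAdd t), funext fun e => ?_⟩
    rw [ht, coloring_smul_apply, coloring_smul_apply]
    simp
  · rintro ⟨h, hh⟩
    exact ⟨h.1, (monochromaticPairs_smul_iff h).mp (congrArg _ hh)⟩

end Correspondence

section Counting

theorem smul_eq_self_iff_semiconj (h : ColoringSymmetry) (c : EdgeColoring) :
    h • c = c ↔ Function.Semiconj c (fun e : Edge => h.1 • e) (· + h.2.toAdd) := by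
  have surjective : Function.Surjective fun e : Edge => h.1 • e := MulAction.surjective h.1
  rw [funext_iff, surjective.forall]
  simp only [coloring_smul_apply, inv_smul_smul]
  exact forall_congr' fun e => eq_comm

theorem card_fixedBy_coloring (h : ColoringSymmetry) :
    Nat.card (MulAction.fixedBy EdgeColoring h) =
      ∏ O ∈ Finset.univ.image (iterateOrbit fun e : Edge => h.1 • e),
        (Finset.univ.filter fun b : ZMod 2 => (· + h.2.toAdd)^[O.card] b = b).card := by
  rw [← card_semiconj _ (MulAction.injective h.1)]
  exact Nat.card_congr (Equiv.subtypeEquivRight (smul_eq_self_iff_semiconj h))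

theorem card_coloringSymmetry : Fintype.card ColoringSymmetry = 96 := by decide +kernel

theorem sum_card_fixedBy_coloring :
    ∑ h : ColoringSymmetry, Nat.card (MulAction.fixedBy EdgeColoring h) = 7296 := by
  simp only [card_fixedBy_coloring]
  decide +kernel

theorem card_orbits_coloring :
    Nat.card (MulAction.orbitRel.Quotient ColoringSymmetry EdgeColoring) = 76 := by
  classical
  have burnside :=
    MulAction.sum_card_fixedBy_eq_card_orbits_mul_card_group ColoringSymmetry EdgeColoring
  simp only [← Nat.card_eq_fintype_card] at burnside
  rw [sum_card_fixedBy_coloring, Nat.card_eq_fintype_card (α := ColoringSymmetry),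
    card_coloringSymmetry] at burnside
  change Nat.card (Quotient _) = 76
  omega

end Counting

theorem isAdmissible_cand : IsAdmissible cand := by
  refine (isAdmissible_iff_nodeCorner_mulVec_eq_zero cand).mpr ⟨Finset.Subset.rfl, ?_⟩
  have cornerIndicator_cand : cornerIndicator cand = 1 :=
    funext fun p => if_pos ((mem_cand_iff p.1).mpr p.2)
  rw [cornerIndicator_cand, sub_self, Matrix.mulVec_zero]

/-- There are exactly `76` `G`-orbits of admissible subsets of the 24 candidate pairs,
and the full set of all candidate pairs (corresponding to the monohedral tiling `B𝒪`)
is admissible; the remaining `75` orbits correspond to the dihedral f-tilings with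
prototiles the Möbius triangle and the kite derived from `B𝒪`. -/
theorem stmt_6 : Nat.card (Quot admRel) = 76 ∧ IsAdmissible cand := by
  refine ⟨?_, isAdmissible_cand⟩
  rw [Nat.card_congr (quotEquivOfSurjective EdgeColoring.admissibleSet admissibleSet_surjective
    admRel_admissibleSet_iff)]
  exact card_orbits_coloring
end

section
/- Call a subset B of the 12 octahedron edges even if every point S_j lies on an even number of edges of B. The group G acts on such subsets componentwise. Then the number of G-orbits of even subsets is exactly 14; two of these orbits are the singleton orbits of the empty set and of the full set of all 12 octahedron edges, and the remaining 12 orbits correspond to the dihedral f-tilings whose prototiles are the Möbius triangle and an isosceles triangle derived from B𝒪 by b-edge assignments. -/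
open Matrix

attribute [local instance] Classical.propDecidable

/-- The 12 octahedron edges: unordered pairs `{S_j, S_l}` with `⟨S_j, S_l⟩ = 0`. -/
noncomputable def octEdges : Finset (Sym2 (Fin 6)) :=
  Finset.univ.filter fun e => ∃ j l : Fin 6, e = s(j, l) ∧ S j ⬝ᵥ S l = 0

/-- A subset `B` of the octahedron edges is even if every point `S_j` lies on an even
number of edges of `B`. -/
noncomputable def IsEvenSubset (B : Finset (Sym2 (Fin 6))) : Prop :=
  B ⊆ octEdges ∧ ∀ j : Fin 6, Even (B.filter fun e => j ∈ e).card

/-- `B'` is the image of `B` under the componentwise action of the matrix `σ`. -/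
def edgeAct (σ : Matrix (Fin 3) (Fin 3) ℝ) (B B' : Finset (Sym2 (Fin 6))) : Prop :=
  ∀ e' : Sym2 (Fin 6), e' ∈ B' ↔
    ∃ e ∈ B, ∃ j l j' l' : Fin 6, e = s(j, l) ∧ e' = s(j', l') ∧
      σ.mulVec (S j) = S j' ∧ σ.mulVec (S l) = S l'

/-- `B'` is obtained from `B` by the action of some `σ ∈ G`. -/
noncomputable def evenRel (B B' : {B : Finset (Sym2 (Fin 6)) // IsEvenSubset B}) : Prop :=
  ∃ σ : Matrix (Fin 3) (Fin 3) ℝ, IsSignedPerm σ ∧ edgeAct σ B.1 B'.1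

/-!
A signed permutation matrix permutes the six octahedron points and preserves their inner products.
Conversely, every permutation of the points that preserves inner products comes from a signed
permutation matrix, whose columns are the images of the standard basis vectors. Hence `evenRel` is
the orbit relation of a group of 48 permutations acting on the even subsets. These permutations
fix `672 = 14 * 48` even subsets in total, so there are 14 orbits by Burnside's lemma.
-/

open Pointwise

section Sym2Action

/-- The componentwise action of a monoid on unordered pairs. -/
instance {M V : Type*} [Monoid M] [MulAction M V] : MulAction M (Sym2 V) where
  smul g e := e.map (g • ·)
  one_smul e := by
    change e.map ((1 : M) • ·) = e
    simp
  mul_smul g h e := by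
    change e.map ((g * h) • ·) = (e.map (h • ·)).map (g • ·)
    simp [Sym2.map_map, mul_smul]

theorem smul_sym2_mk {M V : Type*} [Monoid M] [MulAction M V] (g : M) (x y : V) :
    g • s(x, y) = s(g • x, g • y) := rfl

variable {G V : Type*} [Group G] [MulAction G V]

theorem smul_mem_smul_sym2_iff (g : G) {x : V} {e : Sym2 V} : g • x ∈ g • e ↔ x ∈ e := by
  induction e with
  | _ a b => simp [smul_sym2_mk]

theorem card_filter_smul_mem [DecidableEq V] (g : G) (B : Finset (Sym2 V)) (x : V) :
    ((g • B).filter (g • x ∈ ·)).card = (B.filter (x ∈ ·)).card := by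
  rw [← Finset.card_smul_finset g (B.filter (x ∈ ·))]
  congr 1
  ext e
  rw [← Finset.inv_smul_mem_iff, Finset.mem_filter, Finset.mem_filter, Finset.inv_smul_mem_iff,
    ← smul_mem_smul_sym2_iff g (e := g⁻¹ • e), smul_inv_smul]

end Sym2Action

theorem existsUnique_ne_zero_of_dotProduct_self_eq_one {ι R : Type*} [Fintype ι] [Ring R]
    [CharZero R] {v : ι → R} (hv : ∀ i, v i = 0 ∨ v i = 1 ∨ v i = -1) (hv1 : v ⬝ᵥ v = 1) :
    ∃! i, v i ≠ 0 := by
  have hsq : ∀ i, v i * v i = if v i ≠ 0 then 1 else 0 := fun i ↦ by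
    rcases hv i with h | h | h <;> simp [h]
  have hcard : (Finset.univ.filter fun i ↦ v i ≠ 0).card = 1 := by
    simpa only [dotProduct, hsq, Finset.sum_boole, Nat.cast_eq_one] using hv1
  simpa using Finset.card_eq_one_iff_existsUnique.1 hcard

theorem mulVec_dotProduct_mulVec_of_transpose_mul_self {m n R : Type*} [Fintype m] [Fintype n]
    [DecidableEq n] [CommSemiring R] {M : Matrix m n R} (hM : Mᵀ * M = 1) (v w : n → R) :
    M *ᵥ v ⬝ᵥ M *ᵥ w = v ⬝ᵥ w := by
  rw [dotProduct_mulVec, vecMul_mulVec, hM, vecMul_one]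

theorem isSignedPerm_of_transpose_mul_self {M : Matrix (Fin 3) (Fin 3) ℝ} (hM : Mᵀ * M = 1)
    (hentry : ∀ i j, M i j = 0 ∨ M i j = 1 ∨ M i j = -1) : IsSignedPerm M := by
  refine ⟨hM, fun i ↦ ?_, fun j ↦ ?_, fun i j hij ↦ (hentry i j).resolve_left hij⟩
  · refine existsUnique_ne_zero_of_dotProduct_self_eq_one (hentry i) ?_
    exact (congrArg (· i i) (mul_eq_one_comm.1 hM)).trans (one_apply_eq i)
  · refine existsUnique_ne_zero_of_dotProduct_self_eq_one (v := M.col j) (hentry · j) ?_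
    exact (congrArg (· j j) hM).trans (one_apply_eq j)

/-- The index of the point opposite to `S j`. -/
def antipode : Fin 6 → Fin 6 := ![5, 3, 4, 1, 2, 0]

/-- The index of the `i`-th standard basis vector among the octahedron points. -/
def axisPoint : Fin 3 → Fin 6 := ![1, 2, 0]

/-- The Gram matrix of the octahedron points, with computable entries. -/
def octGram (j l : Fin 6) : ℤ := if j = l then 1 else if j = antipode l then -1 else 0

theorem S_axisPoint (i : Fin 3) : S (axisPoint i) = Pi.single i 1 := by
  ext k
  fin_cases i <;> fin_cases k <;> simp [S, axisPoint]

theorem S_antipode (j : Fin 6) : S (antipode j) = -S j := by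
  ext k
  fin_cases j <;> fin_cases k <;> simp [S, antipode]

theorem eq_axisPoint_or_eq_antipode_axisPoint :
    ∀ j, ∃ i, j = axisPoint i ∨ j = antipode (axisPoint i) := by
  decide

theorem S_dotProduct_S (j l : Fin 6) : S j ⬝ᵥ S l = octGram j l := by
  fin_cases j <;> fin_cases l <;> simp [S, octGram, antipode, dotProduct, Fin.sum_univ_three]

theorem S_injective : Function.Injective S := fun j l h ↦ by
  have hgram : octGram j l = octGram l l := by
    rw [← Int.cast_inj (α := ℝ), ← S_dotProduct_S, ← S_dotProduct_S, h]
  clear h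
  revert j l
  decide

theorem mem_range_S_iff {v : Fin 3 → ℝ} :
    v ∈ Set.range S ↔ ∃ i, v = Pi.single i 1 ∨ v = -Pi.single i 1 := by
  constructor
  · rintro ⟨j, rfl⟩
    obtain ⟨i, rfl | rfl⟩ := eq_axisPoint_or_eq_antipode_axisPoint j
    · exact ⟨i, .inl (S_axisPoint i)⟩
    · exact ⟨i, .inr (by rw [S_antipode, S_axisPoint])⟩
  · rintro ⟨i, rfl | rfl⟩
    · exact ⟨axisPoint i, S_axisPoint i⟩
    · exact ⟨antipode (axisPoint i), by rw [S_antipode, S_axisPoint]⟩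

theorem S_entry (j : Fin 6) (i : Fin 3) : S j i = 0 ∨ S j i = 1 ∨ S j i = -1 := by
  fin_cases j <;> fin_cases i <;> simp [S]

theorem IsSignedPerm.col_mem_range_S {M : Matrix (Fin 3) (Fin 3) ℝ} (hM : IsSignedPerm M)
    (k : Fin 3) : M.col k ∈ Set.range S := by
  obtain ⟨-, -, hcol, hval⟩ := hM
  obtain ⟨i, hi, hunique⟩ := hcol k
  have hsingle : M.col k = Pi.single i (M i k) := by
    ext i'
    by_cases h : i' = i
    · simp [h]
    · simpa [h] using not_imp_comm.1 (hunique i') h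
  rw [mem_range_S_iff]
  refine ⟨i, (hval i k hi).imp ?_ ?_⟩ <;> intro h
  · rw [hsingle, h]
  · rw [hsingle, h, Pi.single_neg]

theorem IsSignedPerm.mulVec_S_mem_range_S {M : Matrix (Fin 3) (Fin 3) ℝ} (hM : IsSignedPerm M)
    (j : Fin 6) : M *ᵥ S j ∈ Set.range S := by
  obtain ⟨k, hk⟩ := mem_range_S_iff.1 (Set.mem_range_self j)
  obtain ⟨l, hl⟩ := hM.col_mem_range_S k
  rcases hk with hk | hk
  · exact ⟨l, by rw [hk, mulVec_single_one, hl]⟩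
  · exact ⟨antipode l, by rw [hk, mulVec_neg, mulVec_single_one, S_antipode, hl]⟩

/-- The octahedral group as a group of permutations: those permutations of the six point indices
that preserve the inner products of the points. Its elements correspond to the signed permutation
matrices. -/
def octSymm : Subgroup (Equiv.Perm (Fin 6)) where
  carrier := {π | ∀ j l, S (π j) ⬝ᵥ S (π l) = S j ⬝ᵥ S l}
  mul_mem' hπ hρ j l := (hπ _ _).trans (hρ j l)
  one_mem' _ _ := rfl
  inv_mem' {π} hπ j l := by simpa using (hπ (π⁻¹ j) (π⁻¹ l)).symm

theorem dotProduct_S_smul (π : octSymm) (j l : Fin 6) : S (π • j) ⬝ᵥ S (π • l) = S j ⬝ᵥ S l :=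
  π.2 j l

theorem IsSignedPerm.exists_octSymm {M : Matrix (Fin 3) (Fin 3) ℝ} (hM : IsSignedPerm M) :
    ∃ π : octSymm, ∀ j, M *ᵥ S j = S (π • j) := by
  choose f hf using hM.mulVec_S_mem_range_S
  have hfdot (j l : Fin 6) : S (f j) ⬝ᵥ S (f l) = S j ⬝ᵥ S l := by
    rw [hf, hf, mulVec_dotProduct_mulVec_of_transpose_mul_self hM.1]
  have hfinj : Function.Injective f := fun j l hjl ↦ by
    have hMinj : Function.Injective M.mulVec :=
      Function.LeftInverse.injective (g := Mᵀ.mulVec) fun v ↦ by simp [hM.1]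
    exact S_injective (hMinj (by rw [← hf, ← hf, hjl]))
  exact ⟨⟨.ofBijective f (Finite.injective_iff_bijective.1 hfinj), hfdot⟩, fun j ↦ (hf j).symm⟩

theorem exists_isSignedPerm (π : octSymm) :
    ∃ M : Matrix (Fin 3) (Fin 3) ℝ, IsSignedPerm M ∧ ∀ j, M *ᵥ S j = S (π • j) := by
  let M : Matrix (Fin 3) (Fin 3) ℝ := of fun i k ↦ S (π • axisPoint k) i
  have hM : Mᵀ * M = 1 := by
    ext k l
    change S (π • axisPoint k) ⬝ᵥ S (π • axisPoint l) = _
    rw [dotProduct_S_smul, S_axisPoint, S_axisPoint, single_one_dotProduct, one_apply,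
      Pi.single_apply]
  -- `M` sends the basis vectors to the right points; its orthogonality settles the other three.
  have htranspose (j : Fin 6) : Mᵀ *ᵥ S (π • j) = S j := by
    ext k
    change S (π • axisPoint k) ⬝ᵥ S (π • j) = _
    rw [dotProduct_S_smul, S_axisPoint, single_one_dotProduct]
  refine ⟨M, isSignedPerm_of_transpose_mul_self hM fun i k ↦ S_entry _ i, fun j ↦ ?_⟩
  rw [← htranspose, mulVec_mulVec, mul_eq_one_comm.1 hM, one_mulVec]

theorem edgeAct_iff_smul_eq {M : Matrix (Fin 3) (Fin 3) ℝ} {π : octSymm}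
    (hπ : ∀ j, M *ᵥ S j = S (π • j)) {B B' : Finset (Sym2 (Fin 6))} :
    edgeAct M B B' ↔ π • B = B' := by
  have hmem (e' : Sym2 (Fin 6)) : e' ∈ π • B ↔ ∃ e ∈ B, ∃ j l j' l' : Fin 6,
      e = s(j, l) ∧ e' = s(j', l') ∧ M *ᵥ S j = S j' ∧ M *ᵥ S l = S l' := by
    simp only [hπ, S_injective.eq_iff, Finset.mem_smul_finset]
    refine exists_congr fun e ↦ and_congr_right fun _ ↦ ⟨?_, ?_⟩
    · rintro rfl
      induction e with
      | _ j l => exact ⟨j, l, _, _, rfl, rfl, rfl, rfl⟩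
    · rintro ⟨j, l, _, _, rfl, rfl, rfl, rfl⟩
      rfl
  rw [edgeAct, eq_comm, Finset.ext_iff]
  exact forall_congr' fun e' ↦ by rw [hmem]

theorem mem_octEdges_iff {j l : Fin 6} : s(j, l) ∈ octEdges ↔ S j ⬝ᵥ S l = 0 := by
  simp only [octEdges, Finset.mem_filter, Finset.mem_univ, true_and]
  refine ⟨?_, fun h ↦ ⟨j, l, rfl, h⟩⟩
  rintro ⟨a, b, hab, h⟩
  rcases Sym2.eq_iff.1 hab with ⟨rfl, rfl⟩ | ⟨rfl, rfl⟩
  · exact h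
  · rwa [dotProduct_comm]

theorem smul_octEdges (π : octSymm) : π • octEdges = octEdges := by
  rw [← MulAction.mem_stabilizer_iff, MulAction.mem_stabilizer_finset]
  intro e
  induction e with
  | _ j l => rw [smul_sym2_mk, mem_octEdges_iff, mem_octEdges_iff, dotProduct_S_smul]

theorem IsEvenSubset.smul {B : Finset (Sym2 (Fin 6))} (hB : IsEvenSubset B) (π : octSymm) :
    IsEvenSubset (π • B) := by
  refine ⟨?_, fun j ↦ ?_⟩
  · rw [← smul_octEdges π]
    exact Finset.smul_finset_subset_smul_finset_iff.2 hB.1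
  · rw [← smul_inv_smul π j, card_filter_smul_mem]
    exact hB.2 _

/-- The componentwise action of the octahedral group on the even subsets. -/
instance : MulAction octSymm {B : Finset (Sym2 (Fin 6)) // IsEvenSubset B} where
  smul π B := ⟨π • B.1, B.2.smul π⟩
  one_smul B := Subtype.ext (one_smul octSymm B.1)
  mul_smul π ρ B := Subtype.ext (mul_smul π ρ B.1)

theorem evenRel_iff_orbitRel (B B' : {B : Finset (Sym2 (Fin 6)) // IsEvenSubset B}) :
    evenRel B B' ↔ MulAction.orbitRel octSymm _ B B' := by
  rw [Setoid.comm', MulAction.orbitRel_apply, MulAction.mem_orbit_iff]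
  constructor
  · rintro ⟨M, hM, hact⟩
    obtain ⟨π, hπ⟩ := hM.exists_octSymm
    exact ⟨π, Subtype.ext ((edgeAct_iff_smul_eq hπ).1 hact)⟩
  · rintro ⟨π, rfl⟩
    obtain ⟨M, hM, hπ⟩ := exists_isSignedPerm π
    exact ⟨M, hM, (edgeAct_iff_smul_eq hπ).2 rfl⟩

/-- The twelve octahedron edges listed explicitly, so that they can be enumerated by evaluation;
the defining filter of `octEdges` tests an equality of real numbers. -/
def explicitOctEdges : Finset (Sym2 (Fin 6)) :=
  {s(0, 1), s(0, 2), s(0, 3), s(0, 4), s(1, 2), s(1, 4), s(1, 5), s(2, 3), s(2, 5), s(3, 4),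
    s(3, 5), s(4, 5)}

theorem octEdges_eq_explicitOctEdges : octEdges = explicitOctEdges := by
  ext e
  induction e with
  | _ j l =>
    rw [mem_octEdges_iff, S_dotProduct_S, Int.cast_eq_zero]
    revert j l
    decide

theorem isEvenSubset_octEdges : IsEvenSubset octEdges := by
  rw [IsEvenSubset, octEdges_eq_explicitOctEdges]
  decide +kernel

/-- The finset of all even subsets, in a form that can be enumerated by evaluation. -/
def evenSubsets : Finset (Finset (Sym2 (Fin 6))) :=
  explicitOctEdges.powerset.filter fun B ↦ ∀ j, Even (B.filter (j ∈ ·)).card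

theorem mem_evenSubsets_iff {B : Finset (Sym2 (Fin 6))} : B ∈ evenSubsets ↔ IsEvenSubset B := by
  rw [evenSubsets, Finset.mem_filter, Finset.mem_powerset, IsEvenSubset,
    octEdges_eq_explicitOctEdges]

theorem mem_octSymm_iff {π : Equiv.Perm (Fin 6)} :
    π ∈ octSymm ↔ ∀ j l, octGram (π j) (π l) = octGram j l := by
  change (∀ j l, S (π j) ⬝ᵥ S (π l) = S j ⬝ᵥ S l) ↔ _
  simp only [S_dotProduct_S, Int.cast_inj]

instance : DecidablePred (· ∈ octSymm) := fun _ ↦ decidable_of_iff' _ mem_octSymm_iff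

theorem card_octSymm : Nat.card octSymm = 48 := by
  rw [Nat.card_eq_fintype_card]
  decide +kernel

theorem card_fixedBy_eq_card_filter (π : octSymm) :
    Nat.card (MulAction.fixedBy {B : Finset (Sym2 (Fin 6)) // IsEvenSubset B} π) =
      (evenSubsets.filter fun B ↦ ∀ e ∈ B, π • e ∈ B).card := by
  have hmem (B : Finset (Sym2 (Fin 6))) :
      B ∈ evenSubsets.filter (fun B ↦ ∀ e ∈ B, π • e ∈ B) ↔ IsEvenSubset B ∧ π • B = B := by
    rw [Finset.mem_filter, mem_evenSubsets_iff, ← MulAction.mem_stabilizer_iff,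
      MulAction.mem_stabilizer_finset']
  rw [← Nat.subtype_card _ hmem]
  exact Nat.card_congr <| (Equiv.subtypeEquivRight fun _ ↦ Subtype.ext_iff).trans
    (Equiv.subtypeSubtypeEquivSubtypeInter IsEvenSubset (fun B ↦ π • B = B))

-- By number of fixed even subsets: `1 * 128 + 6 * 32 + 13 * 16 + 8 * 8 + 20 * 4 = 672`.
theorem sum_card_fixed_evenSubsets :
    ∑ π : octSymm, (evenSubsets.filter fun B ↦ ∀ e ∈ B, π • e ∈ B).card = 672 := by
  decide +kernel

theorem card_quot_evenRel : Nat.card (Quot evenRel) = 14 := by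
  have horbits : Nat.card (Quot evenRel) = Nat.card (Quotient (MulAction.orbitRel octSymm
      {B : Finset (Sym2 (Fin 6)) // IsEvenSubset B})) :=
    Nat.card_congr (Quot.congrRight evenRel_iff_orbitRel)
  have hburnside := Nat.card_congr (MulAction.sigmaFixedByEquivOrbitsProdGroup octSymm
    {B : Finset (Sym2 (Fin 6)) // IsEvenSubset B})
  rw [Nat.card_sigma, Nat.card_prod, ← horbits, card_octSymm] at hburnside
  simp only [card_fixedBy_eq_card_filter, sum_card_fixed_evenSubsets] at hburnside
  omega

/-- There are exactly `14` `G`-orbits of even subsets of the 12 octahedron edges; the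
empty set and the full set of octahedron edges are even subsets whose orbits are
singletons, and the remaining `12` orbits correspond to the dihedral f-tilings with
prototiles the Möbius triangle and an isosceles triangle derived from `B𝒪` by
`b`-edge assignments. -/
theorem stmt_7 :
    Nat.card (Quot evenRel) = 14 ∧
    IsEvenSubset ∅ ∧ IsEvenSubset octEdges ∧
    (∀ (σ : Matrix (Fin 3) (Fin 3) ℝ) (B' : Finset (Sym2 (Fin 6))),
      IsSignedPerm σ → edgeAct σ ∅ B' → B' = ∅) ∧
    (∀ (σ : Matrix (Fin 3) (Fin 3) ℝ) (B' : Finset (Sym2 (Fin 6))),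
      IsSignedPerm σ → edgeAct σ octEdges B' → B' = octEdges) := by
  refine ⟨card_quot_evenRel, by simp [IsEvenSubset], isEvenSubset_octEdges, ?_, ?_⟩ <;>
    intro σ B' hσ hact <;> obtain ⟨π, hπ⟩ := hσ.exists_octSymm
  · rw [← (edgeAct_iff_smul_eq hπ).1 hact, Finset.smul_finset_empty]
  · rw [← (edgeAct_iff_smul_eq hπ).1 hact, smul_octEdges]
end

section
/- For a subset C of the 24 candidate pairs, let Γ_C be the simple graph on the 18 vertices {T'_1,…,T'_4,T_5,…,T_8,S_1,…,S_6,S_2',…,S_5'} whose edge set is the union of the base edges and the pairs {T,S} with (T;S) ∈ C. Then among the graphs Γ_C for which every vertex of Γ_C has even degree, there are exactly 30 graph-isomorphism classes; one class (that of the full candidate set C) corresponds to the monohedral tiling FB𝒪, and the remaining 29 classes correspond to the dihedral f-tilings whose prototiles are the Möbius triangle and the kite derived from FB𝒪. -/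
open Matrix

attribute [local instance] Classical.propDecidable

/-- The 18 vertices: `pt 0,…,pt 3` are `T'_1,…,T'_4`; `pt 4,…,pt 7` are `T_5,…,T_8`;
`pt 8,…,pt 13` are `S_1,…,S_6`; `pt 14,…,pt 17` are `S_2',…,S_5'`. -/
noncomputable def pt : Fin 18 → Fin 3 → ℝ :=
  ![tau • ![Real.sqrt 2, 0, 1], tau • ![0, Real.sqrt 2, 1],
    tau • ![-Real.sqrt 2, 0, 1], tau • ![0, -Real.sqrt 2, 1],
    tau • ![1, 1, -1], tau • ![-1, 1, -1], tau • ![-1, -1, -1], tau • ![1, -1, -1],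
    ![0, 0, 1], ![1, 0, 0], ![0, 1, 0], ![-1, 0, 0], ![0, -1, 0], ![0, 0, -1],
    (1 / Real.sqrt 2) • ![1, -1, 0], (1 / Real.sqrt 2) • ![1, 1, 0],
    (1 / Real.sqrt 2) • ![-1, 1, 0], (1 / Real.sqrt 2) • ![-1, -1, 0]]

/-- The base edges: top square, bottom square, the `S`-edges, and the eight fixed
ridge edges. -/
def baseEdges : Finset (Sym2 (Fin 18)) :=
  { s(0, 1), s(1, 2), s(2, 3), s(3, 0),
    s(4, 5), s(5, 6), s(6, 7), s(7, 4),
    s(8, 14), s(8, 15), s(8, 16), s(8, 17),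
    s(13, 9), s(13, 10), s(13, 11), s(13, 12),
    s(9, 14), s(9, 15), s(10, 15), s(10, 16),
    s(11, 16), s(11, 17), s(12, 17), s(12, 14),
    s(0, 9), s(1, 10), s(2, 11), s(3, 12),
    s(4, 15), s(5, 16), s(6, 17), s(7, 14) }

/-- The 24 candidate pairs `(T; S)`. -/
def candPairs : Finset (Fin 18 × Fin 18) :=
  { (0, 8), (0, 14), (0, 15), (1, 8), (1, 15), (1, 16),
    (2, 8), (2, 16), (2, 17), (3, 8), (3, 17), (3, 14),
    (4, 9), (4, 10), (4, 13), (5, 10), (5, 11), (5, 13),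
    (6, 11), (6, 12), (6, 13), (7, 12), (7, 9), (7, 13) }

/-- The simple graph `Γ_C` on the 18 vertices whose edge set is the union of the base
edges and the pairs `{T, S}` with `(T; S) ∈ C`. -/
noncomputable def Γ (C : Finset (Fin 18 × Fin 18)) : SimpleGraph (Fin 18) :=
  SimpleGraph.fromEdgeSet ↑(baseEdges ∪ C.image fun p => s(p.1, p.2))

/-- `C` is a subset of the candidate pairs for which every vertex of `Γ_C` has even
degree. -/
noncomputable def Good (C : Finset (Fin 18 × Fin 18)) : Prop :=
  C ⊆ candPairs ∧ ∀ v : Fin 18, Even ((Γ C).degree v)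

/-- Graph isomorphism between `Γ_C` and `Γ_{C'}`. -/
noncomputable def isoRel (C C' : {C : Finset (Fin 18 × Fin 18) // Good C}) : Prop :=
  Nonempty (Γ C.1 ≃g Γ C'.1)

/-!
Every point `T` has base degree three and is in three candidate pairs; every point `S` has base
degree four, and is in two candidate pairs if it lies on the equator `z = 0`. Even degree at the
eight equatorial points forces the two pairs there to be chosen together or not at all, so that a
configuration determines a cyclic binary word of length eight, and even degree at the points `T`
then determines the pairs with a pole. The degrees of the poles are automatically even, so every
word occurs. Rotating or reflecting the word does not change the isomorphism class, which leaves
the 30 binary bracelets of length eight, and these are told apart by the number of walks of length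
five in their graphs.
-/

section Bracelets

-- Gives the classical instance low priority, so that `decide` finds the computable ones.
open scoped Classical

open Finset

section Walks

variable {V W : Type*} [Fintype V] [Fintype W]

/-- The number of walks of length `k` in `G` that start at `v`. -/
def walkCount (G : SimpleGraph V) [DecidableRel G.Adj] : ℕ → V → ℕ
  | 0, _ => 1
  | k + 1, v => ∑ u with G.Adj v u, walkCount G k u

/-- The number of walks of length `k` in `G`, an isomorphism invariant. -/
def numWalks (G : SimpleGraph V) [DecidableRel G.Adj] (k : ℕ) : ℕ :=
  ∑ v, walkCount G k v

variable {G : SimpleGraph V} {H : SimpleGraph W} [DecidableRel G.Adj] [DecidableRel H.Adj]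

theorem walkCount_iso (e : G ≃g H) (k : ℕ) (v : V) : walkCount G k v = walkCount H k (e v) := by
  induction k generalizing v with
  | zero => rfl
  | succ k ih => exact sum_equiv e.toEquiv (by simp [e.map_adj_iff]) fun u _ => ih u

theorem numWalks_eq_of_iso (e : G ≃g H) (k : ℕ) : numWalks G k = numWalks H k :=
  Fintype.sum_equiv e.toEquiv _ _ (walkCount_iso e k)

end Walks

section EdgeSets

variable {V : Type*} [DecidableEq V]

theorem mk_mem_image_mk_iff {C : Finset (V × V)} {a b : V} :
    s(a, b) ∈ C.image (fun q => s(q.1, q.2)) ↔ (a, b) ∈ C ∨ (b, a) ∈ C := by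
  simp only [mem_image, Prod.exists, Sym2.eq_iff]
  grind

theorem degree_fromEdgeSet {E : Finset (Sym2 V)} (hE : ∀ e ∈ E, ¬e.IsDiag) (v : V)
    {_ : Fintype ((SimpleGraph.fromEdgeSet (E : Set (Sym2 V))).neighborSet v)} :
    (SimpleGraph.fromEdgeSet (E : Set (Sym2 V))).degree v = #{e ∈ E | v ∈ e} := by
  rw [← SimpleGraph.card_incidenceFinset_eq_degree]
  congr 1
  ext e
  simp only [SimpleGraph.mem_incidenceFinset, SimpleGraph.incidenceSet,
    SimpleGraph.edgeSet_fromEdgeSet, Set.mem_ofPred_eq, mem_filter, Set.mem_sdiff, mem_coe]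
  exact and_congr_left fun _ => and_iff_left_of_imp (hE e)

end EdgeSets

section Dihedral

variable {A : Type*} [AddCommGroup A] {σ : Equiv.Perm A}

/-- A rotation `k ↦ c + k` or a reflection `k ↦ c - k`, written without its constant `c = σ 0`. -/
def IsDihedral (σ : Equiv.Perm A) : Prop :=
  (∀ k i, σ (k + i) = σ k + i) ∨ ∀ k i, σ (k + i) = σ k - i

theorem IsDihedral.eq_add_or_sub_iff (hσ : IsDihedral σ) (k l i : A) :
    (σ l = σ k + i ∨ σ l = σ k - i) ↔ (l = k + i ∨ l = k - i) := by
  rcases hσ with h | h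
  · rw [← h, sub_eq_add_neg, ← h, σ.apply_eq_iff_eq, σ.apply_eq_iff_eq, sub_eq_add_neg]
  · rw [← h, ← sub_neg_eq_add, ← h, σ.apply_eq_iff_eq, σ.apply_eq_iff_eq, sub_eq_add_neg, or_comm]

theorem IsDihedral.apply_sub_eq_apply_add_iff {α : Type*} (hσ : IsDihedral σ) (w : A → α)
    (k i : A) : w (σ (k - i)) = w (σ (k + i)) ↔ w (σ k - i) = w (σ k + i) := by
  rw [sub_eq_add_neg]
  rcases hσ with h | h <;> simp only [h, sub_eq_add_neg, neg_neg]
  exact eq_comm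

theorem isDihedral_addLeft (c : A) : IsDihedral (Equiv.addLeft c) :=
  .inl fun k i => (add_assoc c k i).symm

theorem isDihedral_subLeft (c : A) : IsDihedral (Equiv.subLeft c) :=
  .inr fun k i => sub_add_eq_sub_sub c k i

end Dihedral

/-- The vertices of `Γ C`, arranged by the dihedral symmetry of the configuration: `tip k` are the
points `T`, alternately bottom and top; `equator k` are the eight points `S` in the plane `z = 0`,
in cyclic order, with `equator k` joined to `tip k` by a fixed ridge edge; `pole 0` and `pole 1` are
`S_1` and `S_6`. -/
inductive Vertex
  | tip (k : ZMod 8)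
  | equator (k : ZMod 8)
  | pole (p : ZMod 2)
  deriving DecidableEq, Fintype

open Vertex

/-- The base edges, each listed in at least one orientation. -/
def IsBasePair : Vertex → Vertex → Prop
  | tip k, tip l => l = k + 2 ∨ l = k - 2
  | tip k, equator l => l = k
  | equator k, equator l => l = k + 1 ∨ l = k - 1
  | equator k, pole p => p = k.cast
  | _, _ => False

/-- The candidate pairs `(T; S)` chosen by the cyclic word `w`: both pairs at `equator k` when `w k`
holds, and the pair joining `tip k` to a pole when this makes the degree of `tip k` even. -/
def IsPicked (w : ZMod 8 → Bool) : Vertex → Vertex → Prop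
  | tip k, equator l => (l = k + 1 ∨ l = k - 1) ∧ w l
  | tip k, pole p => p = k.cast + 1 ∧ w (k - 1) = w (k + 1)
  | _, _ => False

instance : DecidableRel IsBasePair := fun x y => by
  cases x <;> cases y <;> unfold IsBasePair <;> infer_instance

instance (w : ZMod 8 → Bool) : DecidableRel (IsPicked w) := fun x y => by
  cases x <;> cases y <;> unfold IsPicked <;> infer_instance

/-- The graph `Γ (chosenPairs w)` on the type `Vertex`. -/
def wordGraph (w : ZMod 8 → Bool) : SimpleGraph Vertex :=
  SimpleGraph.fromRel fun x y => IsBasePair x y ∨ IsPicked w x y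

instance (w : ZMod 8 → Bool) : DecidableRel (wordGraph w).Adj := by
  unfold wordGraph; infer_instance

theorem IsPicked.all_true {w : ZMod 8 → Bool} {x y : Vertex} (h : IsPicked w x y) :
    IsPicked (fun _ => true) x y :=
  match x, y, h with
  | tip _, equator _, h => ⟨h.1, rfl⟩
  | tip _, pole _, h => ⟨h.1, rfl⟩

section Symmetry

/-- Relabelling of the vertices by a permutation of the eight tip and equator indices and a
permutation of the poles. -/
def Vertex.congr (σ : Equiv.Perm (ZMod 8)) (π : Equiv.Perm (ZMod 2)) : Equiv.Perm Vertex where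
  toFun
    | tip k => tip (σ k)
    | equator k => equator (σ k)
    | pole p => pole (π p)
  invFun
    | tip k => tip (σ.symm k)
    | equator k => equator (σ.symm k)
    | pole p => pole (π.symm p)
  left_inv x := by cases x <;> simp
  right_inv x := by cases x <;> simp

variable {σ : Equiv.Perm (ZMod 8)}

theorem IsDihedral.exists_cast_apply_eq (hσ : IsDihedral σ) :
    ∃ p : ZMod 2, ∀ k, ((σ k).cast : ZMod 2) = p + k.cast := by
  have h8 : 2 ∣ 8 := by decide
  refine ⟨(σ 0).cast, fun k => ?_⟩
  rw [← zero_add k]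
  rcases hσ with h | h
  · rw [h, ZMod.cast_add h8, zero_add]
  · rw [h, ZMod.cast_sub h8, CharTwo.sub_eq_add, zero_add]

theorem IsDihedral.wordGraph_iso (hσ : IsDihedral σ) (w : ZMod 8 → Bool) :
    Nonempty (wordGraph (w ∘ σ) ≃g wordGraph w) := by
  obtain ⟨p, hp⟩ := hσ.exists_cast_apply_eq
  let φ := Vertex.congr σ (Equiv.addLeft p)
  have hbase x y : IsBasePair (φ x) (φ y) ↔ IsBasePair x y := by
    cases x <;> cases y <;>
      simp only [φ, Vertex.congr, Equiv.coe_fn_mk, Equiv.coe_addLeft, IsBasePair,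
        hσ.eq_add_or_sub_iff, hp, σ.apply_eq_iff_eq, add_right_inj]
  have hpick x y : IsPicked w (φ x) (φ y) ↔ IsPicked (w ∘ σ) x y := by
    cases x <;> cases y <;>
      simp only [φ, Vertex.congr, Equiv.coe_fn_mk, Equiv.coe_addLeft, IsPicked,
        hσ.eq_add_or_sub_iff, hp, Function.comp_apply, add_assoc, add_right_inj,
        hσ.apply_sub_eq_apply_add_iff]
  exact ⟨φ, by simp [wordGraph, SimpleGraph.fromRel_adj, hbase, hpick]⟩

end Symmetry

/-- `w` is the canonical representative of its orbit under rotations and reflections: the one with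
the least value when read as a binary number. -/
def IsBracelet (w : ZMod 8 → Bool) : Prop :=
  ∀ c, Nat.ofBits (n := 8) w ≤ Nat.ofBits (n := 8) (w ∘ Equiv.addLeft c) ∧
    Nat.ofBits (n := 8) w ≤ Nat.ofBits (n := 8) (w ∘ Equiv.subLeft c)

instance : DecidablePred IsBracelet := fun w => by
  unfold IsBracelet; infer_instance

/-- The binary bracelets of length eight. -/
def bracelets : Finset (ZMod 8 → Bool) := {w | IsBracelet w}

theorem card_bracelets : #bracelets = 30 := by decide +kernel

theorem card_image_numWalks_bracelets :
    #(bracelets.image fun w => numWalks (wordGraph w) 5) = 30 := by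
  decide +kernel

theorem injOn_numWalks_bracelets :
    Set.InjOn (fun w => numWalks (wordGraph w) 5) bracelets :=
  card_image_iff.1 (card_image_numWalks_bracelets.trans card_bracelets.symm)

theorem exists_bracelet_iso (w : ZMod 8 → Bool) :
    ∃ b ∈ bracelets, Nonempty (wordGraph b ≃g wordGraph w) := by
  obtain ⟨b, ⟨e⟩, hmin⟩ := Set.exists_min_image
    {b | Nonempty (wordGraph b ≃g wordGraph w)} (Nat.ofBits (n := 8)) (Set.toFinite _)
    ⟨w, ⟨.refl⟩⟩
  have hle σ (hσ : IsDihedral σ) : Nat.ofBits (n := 8) b ≤ Nat.ofBits (n := 8) (b ∘ σ) :=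
    hmin _ ((hσ.wordGraph_iso b).map (·.trans e))
  exact ⟨b, mem_filter.2 ⟨mem_univ b, fun c =>
    ⟨hle _ (isDihedral_addLeft c), hle _ (isDihedral_subLeft c)⟩⟩, ⟨e⟩⟩

/-- The number of a vertex in the enumeration `pt`. -/
def label : Vertex → Fin 18
  | tip k => (![7, 0, 4, 1, 5, 2, 6, 3] : Fin 8 → Fin 18) k
  | equator k => (![14, 9, 15, 10, 16, 11, 17, 12] : Fin 8 → Fin 18) k
  | pole p => (![8, 13] : Fin 2 → Fin 18) p

theorem label_bijective : Function.Bijective label := by decide +kernel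

theorem mk_label_mem_baseEdges_iff :
    ∀ x y, s(label x, label y) ∈ baseEdges ↔ IsBasePair x y ∨ IsBasePair y x := by decide +kernel

/-- The set of candidate pairs chosen by the cyclic word `w`. -/
def chosenPairs (w : ZMod 8 → Bool) : Finset (Fin 18 × Fin 18) :=
  ({q | IsPicked w q.1 q.2} : Finset (Vertex × Vertex)).image (Prod.map label label)

theorem mk_label_mem_chosenPairs_iff {w : ZMod 8 → Bool} {x y : Vertex} :
    (label x, label y) ∈ chosenPairs w ↔ IsPicked w x y := by
  have hinj := label_bijective.injective.prodMap label_bijective.injective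
  rw [chosenPairs, ← Prod.map_apply, hinj.mem_finset_image, mem_filter_univ]

theorem chosenPairs_true : chosenPairs (fun _ => true) = candPairs := by decide +kernel

theorem ext_label {C D : Finset (Fin 18 × Fin 18)}
    (h : ∀ x y, (label x, label y) ∈ C ↔ (label x, label y) ∈ D) : C = D := by
  ext ⟨a, b⟩
  obtain ⟨x, rfl⟩ := label_bijective.surjective a
  obtain ⟨y, rfl⟩ := label_bijective.surjective b
  exact h x y

theorem chosenPairs_subset_candPairs (w : ZMod 8 → Bool) : chosenPairs w ⊆ candPairs := by
  rw [← chosenPairs_true]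
  exact image_subset_image (monotone_filter_right _ fun _ _ => IsPicked.all_true)

theorem Γ_chosenPairs_adj_label (w : ZMod 8 → Bool) (x y : Vertex) :
    (Γ (chosenPairs w)).Adj (label x) (label y) ↔ (wordGraph w).Adj x y := by
  simp only [Γ, wordGraph, SimpleGraph.fromEdgeSet_adj, SimpleGraph.fromRel_adj, mem_coe,
    mem_union, mk_mem_image_mk_iff, mk_label_mem_baseEdges_iff, mk_label_mem_chosenPairs_iff,
    label_bijective.injective.ne_iff]
  tauto

/-- The enumeration `label` as an isomorphism, identifying the two models of the graph of `w`. -/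
noncomputable def wordGraphIso (w : ZMod 8 → Bool) : wordGraph w ≃g Γ (chosenPairs w) where
  toEquiv := .ofBijective label label_bijective
  map_rel_iff' := Γ_chosenPairs_adj_label w _ _

section Degrees

variable {C : Finset (Fin 18 × Fin 18)}

theorem degree_Γ (hC : C ⊆ candPairs) (v : Fin 18) {_ : Fintype ((Γ C).neighborSet v)} :
    (Γ C).degree v =
      #{e ∈ baseEdges | v ∈ e} + #{q ∈ {q ∈ candPairs | v ∈ s(q.1, q.2)} | q ∈ C} := by
  let edge : Fin 18 × Fin 18 → Sym2 (Fin 18) := fun q => s(q.1, q.2)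
  have hinj : Set.InjOn edge candPairs := card_image_iff.1 (by decide +kernel)
  have hdisj : Disjoint baseEdges (candPairs.image edge) := by decide +kernel
  have hloop : ∀ e ∈ baseEdges ∪ candPairs.image edge, ¬e.IsDiag := by decide +kernel
  have hCedge : C.image edge ⊆ candPairs.image edge := image_subset_image hC
  have hfilter : {q ∈ {q ∈ candPairs | v ∈ edge q} | q ∈ C} = {q ∈ C | v ∈ edge q} := by grind
  calc (Γ C).degree v
    _ = #{e ∈ baseEdges ∪ C.image edge | v ∈ e} :=
      degree_fromEdgeSet (fun e he => hloop e (union_subset_union_right hCedge he)) v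
    _ = #{e ∈ baseEdges | v ∈ e} + #{q ∈ C | v ∈ edge q} := by
      rw [filter_union, card_union_of_disjoint
        (disjoint_filter_filter (hdisj.mono_right hCedge)), filter_image,
        card_image_of_injOn (hinj.mono fun q hq => hC (filter_subset _ _ hq))]
    _ = _ := by rw [← hfilter]

theorem even_degree_equator_iff (hC : C ⊆ candPairs) (k : ZMod 8)
    {_ : Fintype ((Γ C).neighborSet (label (equator k)))} :
    Even ((Γ C).degree (label (equator k))) ↔
      ((label (tip (k - 1)), label (equator k)) ∈ C ↔
        (label (tip (k + 1)), label (equator k)) ∈ C) := by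
  have hbase : ∀ k, #{e ∈ baseEdges | label (equator k) ∈ e} = 4 := by decide +kernel
  have hcand : ∀ k, {q ∈ candPairs | label (equator k) ∈ s(q.1, q.2)} =
      {(label (tip (k - 1)), label (equator k)), (label (tip (k + 1)), label (equator k))} := by
    decide +kernel
  have hne : ∀ k, label (tip (k - 1)) ≠ label (tip (k + 1)) := by decide +kernel
  rw [degree_Γ hC, hbase, hcand, card_filter, sum_pair (by simp [hne])]
  split_ifs <;> simp [*, parity_simps]

theorem even_degree_tip_iff (hC : C ⊆ candPairs) (k : ZMod 8)
    {_ : Fintype ((Γ C).neighborSet (label (tip k)))} :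
    Even ((Γ C).degree (label (tip k))) ↔
      ((label (tip k), label (pole (k.cast + 1))) ∈ C ↔
        ((label (tip k), label (equator (k - 1))) ∈ C ↔
          (label (tip k), label (equator (k + 1))) ∈ C)) := by
  have hbase : ∀ k, #{e ∈ baseEdges | label (tip k) ∈ e} = 3 := by decide +kernel
  have hcand : ∀ k, {q ∈ candPairs | label (tip k) ∈ s(q.1, q.2)} =
      {(label (tip k), label (pole (k.cast + 1))), (label (tip k), label (equator (k - 1))),
        (label (tip k), label (equator (k + 1)))} := by
    decide +kernel
  have hne : ∀ k, label (equator (k - 1)) ≠ label (equator (k + 1)) := by decide +kernel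
  have hne' : ∀ k p, label (pole p) ≠ label (equator k) := by decide +kernel
  rw [degree_Γ hC, hbase, hcand, card_filter, sum_insert (by simp [hne']),
    sum_pair (by simp [hne])]
  split_ifs <;> simp [*, parity_simps]

theorem degree_pole (hC : C ⊆ candPairs) (p : ZMod 2)
    {_ : Fintype ((Γ C).neighborSet (label (pole p)))} :
    (Γ C).degree (label (pole p)) =
      4 + #{k : ZMod 8 | p = k.cast + 1 ∧ (label (tip k), label (pole p)) ∈ C} := by
  have hbase : ∀ p, #{e ∈ baseEdges | label (pole p) ∈ e} = 4 := by decide +kernel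
  have hcand : ∀ p, {q ∈ candPairs | label (pole p) ∈ s(q.1, q.2)} =
      ({k | p = k.cast + 1} : Finset (ZMod 8)).image fun k => (label (tip k), label (pole p)) := by
    decide +kernel
  have hinj : ∀ k l, label (tip k) = label (tip l) → k = l := by decide +kernel
  rw [degree_Γ hC, hbase, hcand, filter_image, filter_filter, card_image_of_injective]
  exact fun k l h => hinj k l (Prod.ext_iff.1 h).1

end Degrees

-- A cyclic word, here the restriction of `w` to a class mod 2, changes value evenly often.
theorem even_card_eq_neighbors : ∀ (w : ZMod 8 → Bool) (p : ZMod 2),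
    Even #{k : ZMod 8 | p = k.cast + 1 ∧ w (k - 1) = w (k + 1)} := by
  decide +kernel

theorem good_chosenPairs (w : ZMod 8 → Bool) : Good (chosenPairs w) := by
  have hsub := chosenPairs_subset_candPairs w
  refine ⟨hsub, fun v => ?_⟩
  obtain ⟨x, rfl⟩ := label_bijective.surjective v
  cases x with
  | tip k => simp [even_degree_tip_iff hsub, mk_label_mem_chosenPairs_iff, IsPicked]
  | equator k => simp [even_degree_equator_iff hsub, mk_label_mem_chosenPairs_iff, IsPicked]
  | pole p =>
    simp only [degree_pole hsub, mk_label_mem_chosenPairs_iff, IsPicked, and_self_left]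
    exact (by decide : Even 4).add (even_card_eq_neighbors w p)

theorem Good.exists_eq_chosenPairs {C : Finset (Fin 18 × Fin 18)} (hC : Good C) :
    ∃ w, C = chosenPairs w := by
  obtain ⟨hsub, heven⟩ := hC
  let w k := decide ((label (tip (k - 1)), label (equator k)) ∈ C)
  have hnext k : (label (tip k), label (equator (k + 1))) ∈ C ↔ w (k + 1) := by simp [w]
  have hprev k : (label (tip k), label (equator (k - 1))) ∈ C ↔ w (k - 1) := by
    simpa [w, iff_comm] using (even_degree_equator_iff hsub (k - 1)).1 (heven _)
  have hpole k : (label (tip k), label (pole (k.cast + 1))) ∈ C ↔ w (k - 1) = w (k + 1) := by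
    rw [(even_degree_tip_iff hsub k).1 (heven _), hprev, hnext, ← Bool.eq_iff_iff]
  refine ⟨w, ext_label fun x y => ?_⟩
  rw [mk_label_mem_chosenPairs_iff]
  have hcand (h : IsPicked (fun _ => true) x y) : (label x, label y) ∈ C ↔ IsPicked w x y :=
    match x, y, h with
    | tip k, equator _, ⟨.inl rfl, _⟩ => by simp [IsPicked, hnext]
    | tip k, equator _, ⟨.inr rfl, _⟩ => by simp [IsPicked, hprev]
    | tip k, pole _, ⟨rfl, _⟩ => by simp [IsPicked, hpole]
  refine ⟨fun h => ?_, fun h => (hcand h.all_true).2 h⟩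
  exact (hcand (mk_label_mem_chosenPairs_iff.1 (chosenPairs_true ▸ hsub h))).1 h

/-- The isomorphism class of the graph encoded by a bracelet. -/
noncomputable def braceletClass (b : bracelets) : Quot isoRel :=
  Quot.mk _ ⟨chosenPairs b, good_chosenPairs b⟩

theorem isoRel_equivalence : Equivalence isoRel where
  refl _ := ⟨.refl⟩
  symm := fun ⟨e⟩ => ⟨e.symm⟩
  trans := fun ⟨e⟩ ⟨e'⟩ => ⟨e.trans e'⟩

theorem braceletClass_injective : Function.Injective braceletClass := by
  intro b b' h
  obtain ⟨e⟩ : isoRel _ _ := (isoRel_equivalence.quot_mk_eq_iff _ _).1 h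
  let e' := ((wordGraphIso b).trans e).trans (wordGraphIso b').symm
  exact Subtype.ext (injOn_numWalks_bracelets b.2 b'.2 (numWalks_eq_of_iso e' 5))

theorem braceletClass_surjective : Function.Surjective braceletClass := by
  rintro ⟨C, hC⟩
  obtain ⟨w, rfl⟩ := hC.exists_eq_chosenPairs
  obtain ⟨b, hb, ⟨e⟩⟩ := exists_bracelet_iso w
  exact ⟨⟨b, hb⟩, Quot.sound ⟨((wordGraphIso b).symm.trans e).trans (wordGraphIso w)⟩⟩

end Bracelets

/-- Among the graphs `Γ_C` with all degrees even there are exactly `30`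
graph-isomorphism classes; the full candidate set satisfies the condition (its class
corresponds to the monohedral tiling `FB𝒪`), and the remaining `29` classes
correspond to the dihedral f-tilings with prototiles the Möbius triangle and the kite
derived from `FB𝒪`. -/
theorem stmt_16 : Nat.card (Quot isoRel) = 30 ∧ Good candPairs := by
  constructor
  · rw [← Nat.card_eq_of_bijective _ ⟨braceletClass_injective, braceletClass_surjective⟩,
      Nat.card_eq_fintype_card, Fintype.card_coe, card_bracelets]
  · exact chosenPairs_true ▸ good_chosenPairs _
end
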